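/- Let L, B be real M×M matrices and d ∈ {0,1}^M, with D the diagonal matrix with diagonal d. Assume: I − L is a Z-matrix with nonnegative diagonal entries that is strictly diagonally dominant in every row; I − B is a Z-matrix with nonnegative diagonal entries that is weakly diagonally dominant; and for every index i with d_i = 1 there is a directed path in the graph of B from i to some index j with d_j = 0. Then the matrix A = (I − D)(I − L) + D(I − B) is a weakly chained diagonally dominant Z-matrix with nonnegative diagonal entries; in particular A is nonsingular and every entry of A⁻¹ is nonnegative. -/

import Mathlib

open Finset

/-- Edge relation of the directed graph of a matrix: an edge from `i` to `j` (with `i ≠ j`)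
whenever `A i j ≠ 0`. -/
def Matrix.GraphEdge {M : ℕ} (A : Matrix (Fin M) (Fin M) ℝ) (i j : Fin M) : Prop :=
  i ≠ j ∧ A i j ≠ 0

/-- Row `i` of `A` is strictly diagonally dominant: `|a_{ii}| > ∑_{j ≠ i} |a_{ij}|`. -/
def Matrix.SDDRow {M : ℕ} (A : Matrix (Fin M) (Fin M) ℝ) (i : Fin M) : Prop :=
  ∑ j ∈ Finset.univ.erase i, |A i j| < |A i i|

/-- `A` is weakly diagonally dominant: `|a_{ii}| ≥ ∑_{j ≠ i} |a_{ij}|` for every row `i`. -/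
def Matrix.WDD {M : ℕ} (A : Matrix (Fin M) (Fin M) ℝ) : Prop :=
  ∀ i, ∑ j ∈ Finset.univ.erase i, |A i j| ≤ |A i i|

/-- `A` is weakly chained diagonally dominant: it is weakly diagonally dominant and from
every row there is a (possibly empty) directed path in the graph of `A` to a strictly
diagonally dominant row. -/
def Matrix.WCDD {M : ℕ} (A : Matrix (Fin M) (Fin M) ℝ) : Prop :=
  A.WDD ∧ ∀ i, ∃ j, Relation.ReflTransGen A.GraphEdge i j ∧ A.SDDRow j

/-- `A` is a Z-matrix: `a_{ij} ≤ 0` whenever `i ≠ j`. -/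
def Matrix.ZMat {M : ℕ} (A : Matrix (Fin M) (Fin M) ℝ) : Prop :=
  ∀ i j, i ≠ j → A i j ≤ 0

lemma wcdd_rowsum {M : ℕ} (A : Matrix (Fin M) (Fin M) ℝ) (hZ : A.ZMat)
    (hD : ∀ i, 0 ≤ A i i) (i : Fin M) :
    ∑ j, A i j = |A i i| - ∑ j ∈ Finset.univ.erase i, |A i j| := by
  rw [← Finset.add_sum_erase _ _ (Finset.mem_univ i), abs_of_nonneg (hD i), sub_eq_add_neg,
    ← Finset.sum_neg_distrib]
  congr 1
  refine Finset.sum_congr rfl fun j hj => ?_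
  rw [abs_of_nonpos (hZ i j (Finset.ne_of_mem_erase hj).symm), neg_neg]

lemma wcdd_monotone {M : ℕ} (A : Matrix (Fin M) (Fin M) ℝ) (hZ : A.ZMat)
    (hD : ∀ i, 0 ≤ A i i) (hW : A.WCDD) (v : Fin M → ℝ)
    (hv : ∀ i, 0 ≤ (A.mulVec v) i) (k : Fin M) : 0 ≤ v k := by
  by_contra! hk
  obtain ⟨i₀, -, hmin⟩ := Finset.exists_min_image Finset.univ v ⟨k, Finset.mem_univ k⟩
  have hm : v i₀ < 0 := lt_of_le_of_lt (hmin k (Finset.mem_univ k)) hk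
  have hterm : ∀ i, v i = v i₀ → ∀ j, A i j * (v j - v i₀) ≤ 0 := by
    intro i hi j
    by_cases hij : i = j
    · subst hij; simp [hi]
    · exact mul_nonpos_of_nonpos_of_nonneg (hZ i j hij)
        (sub_nonneg.2 (hmin j (Finset.mem_univ j)))
  have hsum : ∀ i, 0 ≤ ∑ j, A i j * (v j - v i₀) + v i₀ * ∑ j, A i j := by
    intro i
    have h := hv i
    have e : A.mulVec v i = ∑ j, A i j * (v j - v i₀) + v i₀ * ∑ j, A i j := by
      rw [Finset.mul_sum, ← Finset.sum_add_distrib]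
      simp only [Matrix.mulVec, dotProduct]
      exact Finset.sum_congr rfl fun j _ => by ring
    rwa [e] at h
  have hrow : ∀ i, 0 ≤ ∑ j, A i j := fun i => by
    rw [wcdd_rowsum A hZ hD i]; exact sub_nonneg.2 (hW.1 i)
  obtain ⟨j, hp, hs⟩ := hW.2 i₀
  have hj : v j = v i₀ := by
    clear hs
    induction hp with
    | refl => rfl
    | @tail b c _ hbc ih =>
      by_contra hne
      have hb : v b = v i₀ := ih
      have hneg : ∑ j, A b j * (v j - v i₀) < 0 := by
        refine Finset.sum_neg' (fun j _ => hterm b hb j) ⟨c, Finset.mem_univ c, ?_⟩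
        exact lt_of_le_of_ne (hterm b hb c) (mul_ne_zero hbc.2 (sub_ne_zero.2 hne))
      nlinarith [hsum b, hrow b]
  have h1 : ∑ k, A j k * (v k - v i₀) ≤ 0 := Finset.sum_nonpos fun k _ => hterm j hj k
  have h2 : 0 < ∑ k, A j k := by
    rw [wcdd_rowsum A hZ hD j]; exact sub_pos.2 hs
  nlinarith [hsum j]

lemma wcdd_det {M : ℕ} (A : Matrix (Fin M) (Fin M) ℝ) (hZ : A.ZMat)
    (hD : ∀ i, 0 ≤ A i i) (hW : A.WCDD) : A.det ≠ 0 := by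
  intro h0
  obtain ⟨v, hv0, hv⟩ := Matrix.exists_mulVec_eq_zero_iff.2 h0
  apply hv0
  funext k
  have h1 := wcdd_monotone A hZ hD hW v (fun i => by simp [hv]) k
  have h2 := wcdd_monotone A hZ hD hW (-v) (fun i => by simp [Matrix.mulVec_neg, hv]) k
  simp only [Pi.neg_apply, Pi.zero_apply] at *
  linarith

lemma wcdd_inv_nonneg {M : ℕ} (A : Matrix (Fin M) (Fin M) ℝ) (hZ : A.ZMat)
    (hD : ∀ i, 0 ≤ A i i) (hW : A.WCDD) (i j : Fin M) : 0 ≤ A⁻¹ i j := by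
  refine wcdd_monotone A hZ hD hW (fun k => A⁻¹ k j) (fun k => ?_) i
  have h : (A * A⁻¹) k j = (1 : Matrix (Fin M) (Fin M) ℝ) k j := by
    rw [Matrix.mul_nonsing_inv A (isUnit_iff_ne_zero.2 (wcdd_det A hZ hD hW))]
  have e : A.mulVec (fun k => A⁻¹ k j) k = (A * A⁻¹) k j := rfl
  rw [e, h, Matrix.one_apply]
  split_ifs <;> norm_num

/-- Let `L, B` be real `M × M` matrices and `d ∈ {0,1}^M`, `D = diagonal d`.  If `I − L` is a
Z-matrix with nonnegative diagonal that is strictly diagonally dominant in every row, `I − B`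
is a weakly diagonally dominant Z-matrix with nonnegative diagonal, and from every index `i`
with `d i = 1` there is a directed path in the graph of `B` to an index `j` with `d j = 0`,
then `A = (I − D)(I − L) + D(I − B)` is a weakly chained diagonally dominant Z-matrix with
nonnegative diagonal entries; in particular `A` is nonsingular and `A⁻¹` is entrywise
nonnegative. -/
theorem combined_matrix_wcdd {M : ℕ} (L B : Matrix (Fin M) (Fin M) ℝ) (d : Fin M → ℝ)
    (hd : ∀ i, d i = 0 ∨ d i = 1)
    (hLZ : (1 - L).ZMat) (hLdiag : ∀ i, 0 ≤ (1 - L) i i) (hLsdd : ∀ i, (1 - L).SDDRow i)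
    (hBZ : (1 - B).ZMat) (hBdiag : ∀ i, 0 ≤ (1 - B) i i) (hBwdd : (1 - B).WDD)
    (hpath : ∀ i, d i = 1 →
      ∃ j, Relation.ReflTransGen B.GraphEdge i j ∧ d j = 0) :
    ((1 - Matrix.diagonal d) * (1 - L) + Matrix.diagonal d * (1 - B)).ZMat ∧
    (∀ i, 0 ≤ ((1 - Matrix.diagonal d) * (1 - L) + Matrix.diagonal d * (1 - B)) i i) ∧
    ((1 - Matrix.diagonal d) * (1 - L) + Matrix.diagonal d * (1 - B)).WCDD ∧
    ((1 - Matrix.diagonal d) * (1 - L) + Matrix.diagonal d * (1 - B)).det ≠ 0 ∧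
    (∀ i j, 0 ≤ ((1 - Matrix.diagonal d) * (1 - L) + Matrix.diagonal d * (1 - B))⁻¹ i j) := by
  have hA : ∀ i j, ((1 - Matrix.diagonal d) * (1 - L) + Matrix.diagonal d * (1 - B)) i j
      = (1 - d i) * (1 - L) i j + d i * (1 - B) i j := by
    intro i j
    rw [Matrix.add_apply, Matrix.sub_mul, Matrix.one_mul, Matrix.sub_apply,
      Matrix.diagonal_mul, Matrix.diagonal_mul]
    ring
  generalize (1 - Matrix.diagonal d) * (1 - L) + Matrix.diagonal d * (1 - B) = A at hA ⊢
  have hA0 : ∀ i, d i = 0 → ∀ j, A i j = (1 - L) i j := fun i hi j => by rw [hA, hi]; ring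
  have hA1 : ∀ i, d i = 1 → ∀ j, A i j = (1 - B) i j := fun i hi j => by rw [hA, hi]; ring
  have hZ : A.ZMat := by
    intro i j hij
    rcases hd i with h | h
    · rw [hA0 i h]; exact hLZ i j hij
    · rw [hA1 i h]; exact hBZ i j hij
  have hD : ∀ i, 0 ≤ A i i := by
    intro i
    rcases hd i with h | h
    · rw [hA0 i h]; exact hLdiag i
    · rw [hA1 i h]; exact hBdiag i
  have hS : ∀ i, d i = 0 → A.SDDRow i := by
    intro i h
    have := hLsdd i
    unfold Matrix.SDDRow at *
    simpa only [hA0 i h] using this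
  have hW : A.WCDD := by
    refine ⟨fun i => ?_, fun i => ?_⟩
    · rcases hd i with h | h
      · exact (hS i h).le
      · have := hBwdd i
        simpa only [hA1 i h] using this
    · rcases hd i with h | h
      · exact ⟨i, .refl, hS i h⟩
      · obtain ⟨j, hp, hj⟩ := hpath i h
        clear h
        induction hp using Relation.ReflTransGen.head_induction_on with
        | refl => exact ⟨j, .refl, hS j hj⟩
        | @head a c hac _ ih =>
          rcases hd a with h | h
          · exact ⟨a, .refl, hS a h⟩
          · obtain ⟨k, hk, hs⟩ := ih
            refine ⟨k, .head ⟨hac.1, ?_⟩ hk, hs⟩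
            rw [hA1 a h, Matrix.sub_apply, Matrix.one_apply_ne hac.1, zero_sub]
            exact neg_ne_zero.2 hac.2
  exact ⟨hZ, hD, hW, wcdd_det A hZ hD hW, wcdd_inv_nonneg A hZ hD hW⟩
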